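/- arXiv:2106.12293 — 2 statements merged into one kernel-verified Lean document; each statement's English description precedes it below -/
import Mathlib

section
/- Let p ≥ 1 and suppose G is p-edge-outconnected from s, i.e., for every t ≠ s there exist p pairwise edge-disjoint paths from s to t in G. Then there exists a set H ⊆ E such that: no edge of H enters s; every vertex t ≠ s has exactly p edges of H entering it (so |H| = p(n−1)); and for every t ≠ s there exists a family of p pairwise edge-disjoint paths from s to t, all of whose edges belong to H, whose total cost is minimum among all families of p pairwise edge-disjoint paths from s to t in G. -/
open scoped Classical

namespace MultipathPreserver

variable {V : Type*}

/-- `IsPath F u v L`: `L` is a list of pairwise-distinct directed edges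
`e_1, …, e_k` with `e_j = (x_{j-1}, x_j)`, `x_0 = u`, `x_k = v`, all edges
belonging to the edge set `F`. The empty list is a path from `u` to `u`. -/
def IsPath (F : Set (V × V)) (u v : V) (L : List (V × V)) : Prop :=
  L.Nodup ∧ (∀ e ∈ L, e ∈ F) ∧ List.Chain' (fun e f => e.2 = f.1) L ∧
  (∀ e ∈ L.head?, e.1 = u) ∧ (∀ e ∈ L.getLast?, e.2 = v) ∧ (L = [] → u = v)

/-- The cost of a path (sum of edge costs w.r.t. the cost function `w`). -/
def pathCost (w : V × V → ℝ) (L : List (V × V)) : ℝ := (L.map w).sum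

/-- A family of `k` pairwise edge-disjoint paths from `u` to `v` in the graph
with edge set `F`. -/
def IsDisjointFamily (F : Set (V × V)) (u v : V) {k : ℕ}
    (P : Fin k → List (V × V)) : Prop :=
  (∀ j, IsPath F u v (P j)) ∧ ∀ j j' : Fin k, j ≠ j' → ∀ e ∈ P j, e ∉ P j'

/-- The total cost of a family of paths. -/
def famCost (w : V × V → ℝ) {k : ℕ} (P : Fin k → List (V × V)) : ℝ :=
  ∑ j, pathCost w (P j)

/-- A family of `k` pairwise edge-disjoint paths from `u` to `v` whose total
cost is minimum among all such families. -/
def IsMinFamily (F : Set (V × V)) (w : V × V → ℝ) (u v : V) {k : ℕ}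
    (P : Fin k → List (V × V)) : Prop :=
  IsDisjointFamily F u v P ∧
  ∀ Q : Fin k → List (V × V), IsDisjointFamily F u v Q → famCost w P ≤ famCost w Q

/-- `S` induces `k` edge-disjoint paths of minimum total cost from `u` to `v`
in the graph with edge set `F` and costs `w`: `S` is exactly the set of edges
used by some minimum-total-cost family of `k` pairwise edge-disjoint paths. -/
def Induces (F : Set (V × V)) (w : V × V → ℝ) (u v : V) (k : ℕ)
    (S : Set (V × V)) : Prop :=
  ∃ P : Fin k → List (V × V), IsMinFamily F w u v P ∧ S = {e | ∃ j, e ∈ P j}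

/-- As `Induces`, but additionally the paths of the family are simple
(their vertices `u, (P j)_1.2, …` are pairwise distinct). -/
def InducesSimple (F : Set (V × V)) (w : V × V → ℝ) (u v : V) (k : ℕ)
    (S : Set (V × V)) : Prop :=
  ∃ P : Fin k → List (V × V), IsMinFamily F w u v P ∧
    (∀ j, (u :: (P j).map Prod.snd).Nodup) ∧ S = {e | ∃ j, e ∈ P j}

/-- Edge set of the residual network `G_S`: edges of `E \ S` together with the
reversals of the edges of `S`. -/
def resEdges (E S : Set (V × V)) : Set (V × V) :=
  (E \ S) ∪ {e | (e.2, e.1) ∈ S}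

/-- Cost function of the residual network `G_S`: a reversed edge `(v,u)` with
`(u,v) ∈ S` costs `-c (u,v)`; any other edge keeps its cost. -/
noncomputable def resCost (c : V × V → ℝ) (S : Set (V × V)) (e : V × V) : ℝ :=
  if (e.2, e.1) ∈ S then -c (e.2, e.1) else c e

/-- `η(L)`: the number of edges of `L` belonging to `E \ H`. -/
noncomputable def eta (E H : Set (V × V)) (L : List (V × V)) : ℕ :=
  L.countP (fun e => decide (e ∈ E ∧ e ∉ H))

/-- The measure `|π| = (c_S(π), η(π))` of a path, compared lexicographically. -/
noncomputable def pmeasure (w : V × V → ℝ) (E H : Set (V × V))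
    (L : List (V × V)) : ℝ × ℕ :=
  (pathCost w L, eta E H L)

/-- Strict lexicographic order on measures. -/
def lexLt (a b : ℝ × ℕ) : Prop := a.1 < b.1 ∨ (a.1 = b.1 ∧ a.2 < b.2)

/-- Lexicographic order on measures. -/
def lexLe (a b : ℝ × ℕ) : Prop := a.1 < b.1 ∨ (a.1 = b.1 ∧ a.2 ≤ b.2)

/-- `Π(u,v; G_S)`: the paths from `u` to `v` in the residual network `G_S`
that are minimal w.r.t. the lexicographic order `≼` on `|·| = (c_S(·), η(·))`. -/
def PiMin (E H : Set (V × V)) (c : V × V → ℝ) (S : Set (V × V)) (u v : V) :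
    Set (List (V × V)) :=
  {L | IsPath (resEdges E S) u v L ∧
    ∀ L', IsPath (resEdges E S) u v L' →
      lexLe (pmeasure (resCost c S) E H L) (pmeasure (resCost c S) E H L')}

/-- The number of edges of the prefix `π[s : q(π)]` of a path `π`:
one more than the index of the last edge of `π`, other than the final edge,
belonging to `E \ H`; `0` if no such edge exists. -/
noncomputable def qPrefixLen (E H : Set (V × V)) (L : List (V × V)) : ℕ :=
  L.dropLast.length -
    List.findIdx (fun e => decide (e ∈ E ∧ e ∉ H)) L.dropLast.reverse

/-- `q(π)`: the last internal vertex of `π` whose incoming edge along `π`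
belongs to `E \ H`, and `s` if no such vertex exists.  The prefix `π[s:q(π)]`
is `L.take (qPrefixLen E H L)` and the suffix `π[q(π):t]` is
`L.drop (qPrefixLen E H L)`. -/
noncomputable def qVert (E H : Set (V × V)) (s : V) (L : List (V × V)) : V :=
  ((L.take (qPrefixLen E H L)).getLast?).elim s Prod.snd

/-- `λ(t)`: the maximum number of pairwise edge-disjoint paths from `s` to `t`
in the graph with edge set `E`. -/
noncomputable def lambda (E : Set (V × V)) (s t : V) : ℕ :=
  sSup {k : ℕ | ∃ P : Fin k → List (V × V), IsDisjointFamily E s t P}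

/-- The contribution of the edge `e` to the excess (out-degree minus in-degree) at `x`. -/
noncomputable def arcExcess (x : V) (e : V × V) : ℤ :=
  (if e.1 = x then 1 else 0) - (if e.2 = x then 1 else 0)

/-- Out-degree minus in-degree of `x` in the edge set `S`. -/
noncomputable def excess (S : Finset (V × V)) (x : V) : ℤ :=
  ∑ e ∈ S, arcExcess x e

/-- `S` is (the support of) an integral unit-capacity flow of value `p` from `s` to `t`
in the graph with edge set `E`. -/
def IsFlow (E : Set (V × V)) (s t : V) (p : ℕ) (S : Finset (V × V)) : Prop :=
  ↑S ⊆ E ∧ ∀ x, excess S x = p * arcExcess x (s, t)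

/-- `S` contains a nonempty circulation. -/
def HasCirculation (S : Finset (V × V)) : Prop :=
  ∃ C ⊆ S, C.Nonempty ∧ ∀ x, excess C x = 0

/-- `S` precedes every other flow of value `p` from `s` to `t`, in the lexicographic order given by
the cost `c` and the tie-breaking weight `N`. -/
def IsLexMinFlow (E : Set (V × V)) (c : V × V → ℝ) (N : V × V → ℕ) (s t : V) (p : ℕ)
    (S : Finset (V × V)) : Prop :=
  IsFlow E s t p S ∧ ∀ T, IsFlow E s t p T → T ≠ S →
    ∑ e ∈ S, c e < ∑ e ∈ T, c e ∨
      (∑ e ∈ S, c e = ∑ e ∈ T, c e ∧ ∑ e ∈ S, N e < ∑ e ∈ T, N e)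

section Circulations

lemma arcExcess_swap (x : V) (e : V × V) : arcExcess x e.swap = -arcExcess x e := by
  simp [arcExcess]

lemma excess_image_swap (S : Finset (V × V)) (x : V) :
    excess (S.image Prod.swap) x = -excess S x := by
  unfold excess
  rw [Finset.sum_image (Prod.swap_injective.injOn)]
  simp [arcExcess_swap]

lemma excess_pos {S : Finset (V × V)} {x : V} (hout : ∃ e ∈ S, e.1 = x)
    (hin : ∀ e ∈ S, e.2 ≠ x) : 0 < excess S x := by
  obtain ⟨e, he, hx⟩ := hout
  refine Finset.sum_pos' (fun f hf => ?_) ⟨e, he, ?_⟩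
  · simp only [arcExcess, if_neg (hin f hf)]
    split_ifs <;> simp
  · simp [arcExcess, hin e he, hx]

lemma HasCirculation.image_swap {S : Finset (V × V)} (h : HasCirculation (S.image Prod.swap)) :
    HasCirculation S := by
  obtain ⟨C, hC, hne, h0⟩ := h
  refine ⟨C.image Prod.swap, ?_, hne.image _, fun x => by rw [excess_image_swap, h0, neg_zero]⟩
  intro e he
  obtain ⟨f, hf, rfl⟩ := Finset.mem_image.1 he
  obtain ⟨g, hg, rfl⟩ := Finset.mem_image.1 (hC hf)
  simpa using hg

/-- A finite set mapped into itself contains a nonempty set mapped onto itself. -/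
lemma exists_image_eq_self {α : Type*} (g : α → α) (A : Finset α) (hA : A.Nonempty)
    (hg : ∀ x ∈ A, g x ∈ A) : ∃ O ⊆ A, O.Nonempty ∧ O.image g = O := by
  induction A using Finset.strongInduction with
  | H A ih =>
    have hsub : A.image g ⊆ A := Finset.image_subset_iff.2 hg
    by_cases h : A.image g = A
    · exact ⟨A, subset_rfl, hA, h⟩
    · obtain ⟨O, hO, h1, h2⟩ := ih _ (hsub.ssubset_of_ne h) (hA.image g)
        (fun x hx => Finset.mem_image_of_mem g (hsub hx))
      exact ⟨O, hO.trans hsub, h1, h2⟩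

lemma hasCirculation_of_forall_mem {S : Finset (V × V)} (A : Finset V) (hA : A.Nonempty)
    (h : ∀ x ∈ A, ∃ y ∈ A, (y, x) ∈ S) : HasCirculation S := by
  choose! g hgA hgS using h
  obtain ⟨O, hOA, hO, himg⟩ := exists_image_eq_self g A hA hgA
  have hinj : Set.InjOn g O := by
    rw [← Finset.card_image_iff, himg]
  refine ⟨O.image fun x => (g x, x), ?_, hO.image _, fun x => ?_⟩
  · exact Finset.image_subset_iff.2 fun x hx => hgS x (hOA hx)
  · unfold excess
    rw [Finset.sum_image (fun a _ b _ hab => (Prod.ext_iff.1 hab).2)]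
    simp only [arcExcess, Finset.sum_sub_distrib]
    rw [← Finset.sum_image (f := fun y => if y = x then (1 : ℤ) else 0) hinj, himg, sub_self]

lemma hasCirculation_of_entering {S : Finset (V × V)} {v : V} (hv : ∃ e ∈ S, e.2 = v)
    (h : ∀ x, x ≠ v → excess S x ≤ 0) : HasCirculation S := by
  refine hasCirculation_of_forall_mem (S.image Prod.snd) ?_ ?_
  · obtain ⟨e, he, -⟩ := hv
    exact ⟨_, Finset.mem_image_of_mem _ he⟩
  · intro x hx
    obtain ⟨e, he, rfl⟩ := Finset.mem_image.1 hx
    refine ⟨e.1, ?_, he⟩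
    rw [Finset.mem_image]
    by_cases hev : e.1 = v
    · rwa [hev]
    · by_contra! hcon
      exact (excess_pos ⟨e, he, rfl⟩ hcon).not_ge (h _ hev)

lemma hasCirculation_of_leaving {S : Finset (V × V)} {v : V} (hv : ∃ e ∈ S, e.1 = v)
    (h : ∀ x, x ≠ v → 0 ≤ excess S x) : HasCirculation S := by
  apply HasCirculation.image_swap
  apply hasCirculation_of_entering (v := v)
  · obtain ⟨e, he, hx⟩ := hv
    exact ⟨e.swap, Finset.mem_image_of_mem _ he, hx⟩
  · intro x hx
    rw [excess_image_swap]
    linarith [h x hx]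

end Circulations

section LexMinFlow

variable {E : Set (V × V)} {c : V × V → ℝ} {N : V × V → ℕ} {s t v : V} {p : ℕ}
  {S T : Finset (V × V)}

lemma IsLexMinFlow.not_hasCirculation (hc : ∀ e ∈ E, 0 ≤ c e) (hS : IsLexMinFlow E c N s t p S) :
    ¬ HasCirculation S := by
  rintro ⟨C, hCS, hne, h0⟩
  have hsplit {M : Type} [AddCommMonoid M] (f : V × V → M) :
      ∑ e ∈ S \ C, f e + ∑ e ∈ C, f e = ∑ e ∈ S, f e := Finset.sum_sdiff hCS
  have hflow : IsFlow E s t p (S \ C) := by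
    refine ⟨fun e he => hS.1.1 (Finset.sdiff_subset he), fun x => ?_⟩
    rw [← hS.1.2 x]
    have h1 := hsplit (arcExcess x)
    have h2 := h0 x
    unfold excess at *
    omega
  have hneq : S \ C ≠ S := by
    obtain ⟨e, he⟩ := hne
    intro h
    have := hCS he
    rw [← h] at this
    exact (Finset.mem_sdiff.1 this).2 he
  have hcC : 0 ≤ ∑ e ∈ C, c e := Finset.sum_nonneg fun e he => hc e (hS.1.1 (hCS he))
  have h1 := hsplit c
  have h2 := hsplit N
  rcases hS.2 _ hflow hneq with h | ⟨-, h⟩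
  · linarith
  · omega

/-- Replacing `A ⊆ S` by `B`, disjoint from `S`, changes sums over `S` additively. -/
lemma sum_sdiff_union {α M : Type*} [DecidableEq α] [AddCommMonoid M] (f : α → M) {S A B : Finset α}
    (hA : A ⊆ S) (hB : Disjoint S B) :
    ∑ e ∈ S \ A ∪ B, f e + ∑ e ∈ A, f e = ∑ e ∈ S, f e + ∑ e ∈ B, f e := by
  rw [Finset.sum_union (hB.mono_left Finset.sdiff_subset), add_right_comm, Finset.sum_sdiff hA]

/-- Two lexicographically minimal flows cannot be improved along a common residual circulation. -/
lemma IsLexMinFlow.eq_empty_of_exchange (hS : IsLexMinFlow E c N s v p S)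
    (hT : IsLexMinFlow E c N s t p T) {A B : Finset (V × V)} (hA : A ⊆ S \ T) (hB : B ⊆ T \ S)
    (h : ∀ x, excess A x = excess B x) : A = ∅ ∧ B = ∅ := by
  have hAS := hA.trans Finset.sdiff_subset
  have hBT := hB.trans Finset.sdiff_subset
  have hSB : Disjoint S B := Finset.disjoint_sdiff.mono_right hB
  have hTA : Disjoint T A := Finset.disjoint_sdiff.mono_right hA
  have hS' : IsFlow E s v p (S \ A ∪ B) := by
    refine ⟨fun e he => ?_, fun x => ?_⟩
    · rcases Finset.mem_union.1 he with he | he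
      · exact hS.1.1 (Finset.sdiff_subset he)
      · exact hT.1.1 (hBT he)
    · rw [← hS.1.2 x]
      have h1 := sum_sdiff_union (arcExcess x) hAS hSB
      have h2 := h x
      unfold excess at *
      omega
  have hT' : IsFlow E s t p (T \ B ∪ A) := by
    refine ⟨fun e he => ?_, fun x => ?_⟩
    · rcases Finset.mem_union.1 he with he | he
      · exact hT.1.1 (Finset.sdiff_subset he)
      · exact hS.1.1 (hAS he)
    · rw [← hT.1.2 x]
      have h1 := sum_sdiff_union (arcExcess x) hBT hTA
      have h2 := h x
      unfold excess at *
      omega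
  by_contra hne
  have hex : ∃ e, e ∈ A ∨ e ∈ B := by
    by_contra! hcon
    exact hne ⟨Finset.eq_empty_of_forall_notMem fun e => (hcon e).1,
      Finset.eq_empty_of_forall_notMem fun e => (hcon e).2⟩
  obtain ⟨e, he⟩ := hex
  have hneS : S \ A ∪ B ≠ S := by
    intro heq
    have hmem := Finset.ext_iff.1 heq e
    have h1 := @hA e
    have h2 := @hB e
    simp only [Finset.mem_union, Finset.mem_sdiff] at hmem h1 h2
    tauto
  have hneT : T \ B ∪ A ≠ T := by
    intro heq
    have hmem := Finset.ext_iff.1 heq e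
    have h1 := @hA e
    have h2 := @hB e
    simp only [Finset.mem_union, Finset.mem_sdiff] at hmem h1 h2
    tauto
  have c1 := sum_sdiff_union c hAS hSB
  have c2 := sum_sdiff_union c hBT hTA
  have n1 := sum_sdiff_union N hAS hSB
  have n2 := sum_sdiff_union N hBT hTA
  rcases hS.2 _ hS' hneS with h1 | ⟨h1, h1'⟩ <;> rcases hT.2 _ hT' hneT with h2 | ⟨h2, h2'⟩
  · linarith
  · linarith
  · linarith
  · omega

/-- Every edge entering `v` in the minimal flow to `t` is used by the minimal flow to `v`. -/
lemma IsLexMinFlow.mem_of_mem (hanti : ∀ e ∈ E, (e.2, e.1) ∉ E) (hS : IsLexMinFlow E c N s v p S)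
    (hT : IsLexMinFlow E c N s t p T) {e : V × V} (he : e ∈ T) (hev : e.2 = v) : e ∈ S := by
  by_contra heS
  set D : Finset (V × V) := (T \ S) ∪ (S \ T).image Prod.swap with hD
  have hdisj : Disjoint (T \ S) ((S \ T).image Prod.swap) := by
    rw [Finset.disjoint_left]
    intro f hf hf'
    obtain ⟨g, hg, rfl⟩ := Finset.mem_image.1 hf'
    exact hanti g (hS.1.1 (Finset.mem_sdiff.1 hg).1) (hT.1.1 (Finset.mem_sdiff.1 hf).1)
  have hexcess : ∀ x, excess D x = excess T x - excess S x := by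
    intro x
    have h1 := Finset.sum_union hdisj (f := arcExcess x)
    have h2 := excess_image_swap (S \ T) x
    have h3 := Finset.sum_sdiff_sub_sum_sdiff (s₁ := S) (s₂ := T) (f := arcExcess x)
    unfold excess at *
    rw [h1, h2]
    linarith
  have hcirc : HasCirculation D := by
    refine hasCirculation_of_entering
      ⟨e, Finset.mem_union_left _ (Finset.mem_sdiff.2 ⟨he, heS⟩), hev⟩ fun x hx => ?_
    rw [hexcess, hS.1.2, hT.1.2, ← mul_sub]
    refine mul_nonpos_of_nonneg_of_nonpos (Int.natCast_nonneg p) ?_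
    simp only [arcExcess, if_neg hx.symm]
    split_ifs <;> simp
  obtain ⟨C, hCD, hne, h0⟩ := hcirc
  have hA : (S \ T).filter (fun f => f.swap ∈ C) ⊆ S \ T := Finset.filter_subset _ _
  have hB : (T \ S).filter (fun f => f ∈ C) ⊆ T \ S := Finset.filter_subset _ _
  have hC : C = (T \ S).filter (fun f => f ∈ C) ∪
      ((S \ T).filter (fun f => f.swap ∈ C)).image Prod.swap := by
    ext f
    constructor
    · intro hf
      rcases Finset.mem_union.1 (hCD hf) with h | h
      · exact Finset.mem_union_left _ (Finset.mem_filter.2 ⟨h, hf⟩)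
      · obtain ⟨g, hg, rfl⟩ := Finset.mem_image.1 h
        exact Finset.mem_union_right _
          (Finset.mem_image_of_mem _ (Finset.mem_filter.2 ⟨hg, hf⟩))
    · intro hf
      rcases Finset.mem_union.1 hf with h | h
      · exact (Finset.mem_filter.1 h).2
      · obtain ⟨g, hg, rfl⟩ := Finset.mem_image.1 h
        exact (Finset.mem_filter.1 hg).2
  have hAB := hS.eq_empty_of_exchange hT hA hB fun x => by
    have h1 := Finset.sum_union (hdisj.mono hB (Finset.image_subset_image hA)) (f := arcExcess x)
    have h2 := excess_image_swap ((S \ T).filter (fun f => f.swap ∈ C)) x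
    have h3 := h0 x
    rw [hC] at h3
    unfold excess at *
    rw [h1, h2] at h3
    linarith
  rw [hAB.1, hAB.2] at hC
  simp [hC] at hne

lemma IsLexMinFlow.snd_ne_source (hc : ∀ e ∈ E, 0 ≤ c e) (hS : IsLexMinFlow E c N s t p S)
    {e : V × V} (he : e ∈ S) : e.2 ≠ s := by
  intro hes
  refine hS.not_hasCirculation hc (hasCirculation_of_entering ⟨e, he, hes⟩ fun x hx => ?_)
  rw [hS.1.2]
  refine mul_nonpos_of_nonneg_of_nonpos (Int.natCast_nonneg p) ?_
  simp only [arcExcess, if_neg hx.symm]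
  split_ifs <;> simp

lemma IsLexMinFlow.card_entering (hc : ∀ e ∈ E, 0 ≤ c e) (hS : IsLexMinFlow E c N s t p S)
    (hst : t ≠ s) : (S.filter fun e => e.2 = t).card = p := by
  have hout : ∀ e ∈ S, e.1 ≠ t := by
    intro e he het
    refine hS.not_hasCirculation hc (hasCirculation_of_leaving ⟨e, he, het⟩ fun x hx => ?_)
    rw [hS.1.2]
    refine mul_nonneg (Int.natCast_nonneg p) ?_
    simp only [arcExcess, if_neg hx.symm]
    split_ifs <;> simp
  have h := hS.1.2 t
  have h' : excess S t = -((S.filter fun e => e.2 = t).card : ℤ) := by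
    unfold excess
    rw [Finset.card_filter, Nat.cast_sum, ← Finset.sum_neg_distrib]
    refine Finset.sum_congr rfl fun e he => ?_
    simp [arcExcess, hout e he]
  rw [h'] at h
  simp [arcExcess, hst.symm] at h
  exact h

lemma exists_isLexMinFlow [Finite V]
    (hN : Function.Injective fun S : Finset (V × V) => ∑ e ∈ S, N e)
    (h : ∃ S, IsFlow E s t p S) : ∃ S, IsLexMinFlow E c N s t p S := by
  obtain ⟨S, hS, hmin⟩ := Set.exists_min_image {S | IsFlow E s t p S}
    (fun S => toLex (∑ e ∈ S, c e, ∑ e ∈ S, N e)) (Set.toFinite _) h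
  refine ⟨S, hS, fun T hT hne => ?_⟩
  have := hmin T hT
  rw [Prod.Lex.le_iff] at this
  refine this.imp id fun h => ⟨h.1, lt_of_le_of_ne h.2 fun heq => hne (hN heq).symm⟩

end LexMinFlow

section Paths

variable {E : Set (V × V)} {s t u v : V} {p : ℕ}

lemma sum_map_arcExcess (x : V) {L : List (V × V)} (hch : L.IsChain (fun e f => e.2 = f.1))
    (hhead : ∀ e ∈ L.head?, e.1 = u) (hlast : ∀ e ∈ L.getLast?, e.2 = v) (hnil : L = [] → u = v) :
    (L.map (arcExcess x)).sum = arcExcess x (u, v) := by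
  induction L generalizing u with
  | nil => simp [arcExcess, hnil rfl]
  | cons e L ih =>
    have he : e.1 = u := hhead e rfl
    rw [List.map_cons, List.sum_cons, ih (u := e.2)]
    · simp [arcExcess, he]
    · exact hch.tail
    · intro f hf
      cases L with
      | nil => simp at hf
      | cons g L =>
        simp only [List.head?_cons, Option.mem_def, Option.some.injEq] at hf
        rw [List.isChain_cons_cons] at hch
        rw [← hf, hch.1]
    · intro f hf
      apply hlast
      cases L with
      | nil => simp at hf
      | cons g L => simpa using hf
    · rintro rfl
      exact hlast e rfl

lemma IsPath.excess_toFinset {L : List (V × V)} (h : IsPath E u v L) (x : V) :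
    excess L.toFinset x = arcExcess x (u, v) := by
  unfold excess
  rw [List.sum_toFinset _ h.1]
  exact sum_map_arcExcess x h.2.2.1 h.2.2.2.1 h.2.2.2.2.1 h.2.2.2.2.2

/-- The set of edges used by a family of paths. -/
noncomputable def familyEdges {k : ℕ} (P : Fin k → List (V × V)) : Finset (V × V) :=
  Finset.univ.biUnion fun j => (P j).toFinset

lemma IsDisjointFamily.sum_familyEdges {M : Type*} [AddCommMonoid M] {P : Fin p → List (V × V)}
    (h : IsDisjointFamily E u v P) (f : V × V → M) :
    ∑ e ∈ familyEdges P, f e = ∑ j, ∑ e ∈ (P j).toFinset, f e := by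
  refine Finset.sum_biUnion fun i _ j _ hij => ?_
  rw [Function.onFun, Finset.disjoint_left]
  intro e
  simpa using h.2 i j hij e

lemma IsDisjointFamily.isFlow {P : Fin p → List (V × V)} (h : IsDisjointFamily E u v P) :
    IsFlow E u v p (familyEdges P) := by
  refine ⟨fun e he => ?_, fun x => ?_⟩
  · simp only [familyEdges, Finset.coe_biUnion, Set.mem_iUnion, Finset.mem_coe,
      List.mem_toFinset] at he
    obtain ⟨j, -, hj⟩ := he
    exact (h.1 j).2.1 e hj
  · rw [excess, h.sum_familyEdges]
    change ∑ j, excess (P j).toFinset x = _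
    rw [Finset.sum_congr rfl fun j _ => (h.1 j).excess_toFinset x]
    simp

lemma IsDisjointFamily.famCost_eq {P : Fin p → List (V × V)} (h : IsDisjointFamily E u v P)
    (c : V × V → ℝ) : famCost c P = ∑ e ∈ familyEdges P, c e := by
  rw [h.sum_familyEdges]
  exact Finset.sum_congr rfl fun j _ => (List.sum_toFinset c (h.1 j).1).symm

/-- Reachability by paths is closed under following an edge. -/
lemma IsPath.exists_extend {x y : V} {L : List (V × V)} (h : IsPath E u x L) (hxy : (x, y) ∈ E) :
    ∃ L', IsPath E u y L' := by
  obtain ⟨hnd, hE, hch, hhead, hlast, hnil⟩ := h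
  replace hch : L.IsChain (fun e f => e.2 = f.1) := hch
  by_cases hmem : (x, y) ∈ L
  · obtain ⟨L₁, L₂, rfl⟩ := List.append_of_mem hmem
    have hpre : L₁ ++ [(x, y)] <+: L₁ ++ (x, y) :: L₂ := ⟨L₂, by simp⟩
    refine ⟨L₁ ++ [(x, y)], hnd.sublist hpre.sublist, fun e he => hE e (hpre.subset he),
      hch.prefix hpre, ?_, by simp, by simp⟩
    intro e he
    apply hhead
    cases L₁ <;> simpa using he
  · refine ⟨L ++ [(x, y)], ?_, ?_, ?_, ?_, by simp, by simp⟩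
    · rw [List.nodup_append]
      refine ⟨hnd, by simp, ?_⟩
      rintro a ha b hb rfl
      exact hmem (by simpa [List.mem_singleton.1 hb] using ha)
    · intro e he
      rcases List.mem_append.1 he with he | he
      · exact hE e he
      · rwa [List.mem_singleton.1 he]
    · refine List.isChain_append.2 ⟨hch, by simp, ?_⟩
      intro e he f hf
      simp only [List.head?_cons, Option.mem_def, Option.some.injEq] at hf
      rw [← hf, hlast e he]
    · intro e he
      cases L with
      | nil =>
        simp only [List.nil_append, List.head?_cons, Option.mem_def, Option.some.injEq] at he
        rw [← he, hnil rfl]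
      | cons g L => exact hhead e (by simpa using he)

lemma IsFlow.exists_isPath [Fintype V] {S : Finset (V × V)} (h : IsFlow E s t (p + 1) S) :
    ∃ L, IsPath (S : Set (V × V)) s t L := by
  by_contra ht
  set R : Finset V := Finset.univ.filter fun x => ∃ L, IsPath (S : Set (V × V)) s x L with hR
  have hsR : s ∈ R := by
    simp only [hR, Finset.mem_filter, Finset.mem_univ, true_and]
    exact ⟨[], by simp, by simp, List.isChain_nil, by simp, by simp, fun _ => rfl⟩
  have htR : t ∉ R := by simpa [hR] using ht
  have hind : ∀ e : V × V, ∑ x ∈ R, arcExcess x e =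
      (if e.1 ∈ R then 1 else 0) - (if e.2 ∈ R then 1 else 0) := by
    intro e
    simp [arcExcess, Finset.sum_sub_distrib]
  have h1 : ∑ x ∈ R, excess S x = p + 1 := by
    simp_rw [h.2]
    rw [← Finset.mul_sum, hind]
    simp [hsR, htR]
  have h2 : ∑ x ∈ R, excess S x ≤ 0 := by
    unfold excess
    rw [Finset.sum_comm]
    refine Finset.sum_nonpos fun e he => ?_
    rw [hind]
    by_cases h1 : e.1 ∈ R
    · have h2 : e.2 ∈ R := by
        simp only [hR, Finset.mem_filter, Finset.mem_univ, true_and] at h1 ⊢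
        obtain ⟨L, hL⟩ := h1
        exact hL.exists_extend he
      simp [h1, h2]
    · rw [if_neg h1]
      split_ifs <;> simp
  omega

lemma IsPath.mono {F : Set (V × V)} {L : List (V × V)} (h : IsPath E u v L) (hEF : E ⊆ F) :
    IsPath F u v L :=
  ⟨h.1, fun e he => hEF (h.2.1 e he), h.2.2⟩

/-- A flow of value `p` carries `p` edge-disjoint paths. -/
lemma IsFlow.exists_isDisjointFamily [Fintype V] {S : Finset (V × V)} (h : IsFlow E s t p S) :
    ∃ P : Fin p → List (V × V), IsDisjointFamily (S : Set (V × V)) s t P := by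
  induction p generalizing S with
  | zero => exact ⟨Fin.elim0, fun j => j.elim0, fun j => j.elim0⟩
  | succ p ih =>
    obtain ⟨L, hL⟩ := h.exists_isPath
    have hLS : L.toFinset ⊆ S := fun e he => hL.2.1 e (List.mem_toFinset.1 he)
    have hrest : IsFlow E s t p (S \ L.toFinset) := by
      refine ⟨fun e he => h.1 (Finset.sdiff_subset he), fun x => ?_⟩
      have h1 := h.2 x
      have h2 := hL.excess_toFinset x
      have h3 := Finset.sum_sdiff hLS (f := arcExcess x)
      unfold excess at *
      push_cast at h1
      linarith
    obtain ⟨P, hP, hdisj⟩ := ih hrest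
    have hnot : ∀ j, ∀ e ∈ P j, e ∉ L := by
      intro j e he
      have := (hP j).2.1 e he
      simp only [Finset.coe_sdiff, List.coe_toFinset, Set.mem_sdiff, Set.mem_ofPred_eq] at this
      exact this.2
    refine ⟨Fin.cons L P, ?_, ?_⟩
    · refine Fin.cases hL fun j => ?_
      exact (hP j).mono (by simp)
    · refine Fin.cases (Fin.cases (fun h => (h rfl).elim) fun j _ e he he' => ?_)
        fun i => Fin.cases (fun _ e he => hnot i e he) fun j hij => ?_
      · exact hnot j e he' he
      · exact hdisj i j fun h => hij (by rw [h])

lemma IsLexMinFlow.exists_isMinFamily [Fintype V] {c : V × V → ℝ} {N : V × V → ℕ}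
    {S : Finset (V × V)} (hc : ∀ e ∈ E, 0 ≤ c e) (hS : IsLexMinFlow E c N s t p S) :
    ∃ P : Fin p → List (V × V), IsMinFamily E c s t P ∧ ∀ j, ∀ e ∈ P j, e ∈ S := by
  obtain ⟨P, hP⟩ := hS.1.exists_isDisjointFamily
  have hPS : ∀ j, ∀ e ∈ P j, e ∈ S := fun j e he => (hP.1 j).2.1 e he
  refine ⟨P, ⟨⟨fun j => (hP.1 j).mono hS.1.1, hP.2⟩, fun Q hQ => ?_⟩, hPS⟩
  have hsub : familyEdges P ⊆ S :=
    Finset.biUnion_subset.2 fun j _ e he => hPS j e (List.mem_toFinset.1 he)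
  calc famCost c P = ∑ e ∈ familyEdges P, c e := hP.famCost_eq c
    _ ≤ ∑ e ∈ S, c e := Finset.sum_le_sum_of_subset_of_nonneg hsub fun e he _ => hc e (hS.1.1 he)
    _ ≤ ∑ e ∈ familyEdges Q, c e := by
      by_cases heq : familyEdges Q = S
      · rw [heq]
      · rcases hS.2 _ hQ.isFlow heq with h | ⟨h, -⟩
        · exact h.le
        · exact h.le
    _ = famCost c Q := (hQ.famCost_eq c).symm

end Paths

/-- Some natural number weight separates all finite subsets of a finite type. -/
lemma exists_injective_sum (α : Type*) [Finite α] :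
    ∃ N : α → ℕ, Function.Injective fun S : Finset α => ∑ e ∈ S, N e := by
  obtain ⟨n, ⟨f⟩⟩ := Finite.exists_equiv_fin α
  let g : α ↪ ℕ := f.toEmbedding.trans Fin.valEmbedding
  refine ⟨fun a => 2 ^ g a, fun S T h => ?_⟩
  apply Finset.map_injective g
  apply Finset.geomSum_injective le_rfl
  simpa using h

/-- If `G` is `p`-edge-outconnected from `s`, then there is a
single-source `p`-multipath preserver `H ⊆ E` with no edge entering `s`,
exactly `p` edges entering each `t ≠ s` (hence `|H| = p (n-1)`), containing,
for every `t ≠ s`, a family of `p` edge-disjoint paths from `s` to `t` of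
minimum total cost in `G`. -/
theorem exists_optimal_preserver [Fintype V]
    (E : Set (V × V)) (c : V × V → ℝ) (s : V)
    (hirr : ∀ e ∈ E, e.1 ≠ e.2)
    (hanti : ∀ e ∈ E, (e.2, e.1) ∉ E)
    (hc : ∀ e ∈ E, 0 ≤ c e)
    (p : ℕ) (hp : 1 ≤ p)
    (hconn : ∀ t, t ≠ s → ∃ P : Fin p → List (V × V), IsDisjointFamily E s t P) :
    ∃ H ⊆ E,
      (∀ e ∈ H, e.2 ≠ s) ∧
      (∀ t, t ≠ s → {e ∈ H | e.2 = t}.ncard = p) ∧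
      H.ncard = p * (Fintype.card V - 1) ∧
      ∀ t, t ≠ s → ∃ P : Fin p → List (V × V),
        IsMinFamily E c s t P ∧ ∀ j, ∀ e ∈ P j, e ∈ H := by
  obtain ⟨N, hN⟩ := exists_injective_sum (V × V)
  have hex : ∀ t, t ≠ s → ∃ S, IsLexMinFlow E c N s t p S := fun t ht => by
    obtain ⟨P, hP⟩ := hconn t ht
    exact exists_isLexMinFlow hN ⟨_, hP.isFlow⟩
  choose! S hS using hex
  have hfib : ∀ t, t ≠ s → {e ∈ {e : V × V | e.2 ≠ s ∧ e ∈ S e.2} | e.2 = t} =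
      ((S t).filter fun e => e.2 = t : Finset (V × V)) := by
    intro t ht
    ext e
    simp only [Set.mem_ofPred_eq, Finset.coe_filter]
    constructor
    · rintro ⟨⟨-, he⟩, rfl⟩
      exact ⟨he, rfl⟩
    · rintro ⟨he, rfl⟩
      exact ⟨⟨ht, he⟩, rfl⟩
  have hcard : ∀ t, t ≠ s → {e ∈ {e : V × V | e.2 ≠ s ∧ e ∈ S e.2} | e.2 = t}.ncard = p := by
    intro t ht
    rw [hfib t ht, Set.ncard_coe_finset, (hS t ht).card_entering hc ht]
  refine ⟨{e | e.2 ≠ s ∧ e ∈ S e.2}, fun e he => (hS _ he.1).1.1 he.2, fun e he => he.1,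
    hcard, ?_, fun t ht => ?_⟩
  · rw [Set.ncard_eq_toFinset_card', Finset.card_eq_sum_card_fiberwise (f := Prod.snd)
      (t := Finset.univ.erase s) (fun e he => by simpa using (Set.mem_toFinset.1 he).1),
      Finset.sum_congr rfl (g := fun _ => p), Finset.sum_const, Finset.card_erase_of_mem
      (Finset.mem_univ s), Finset.card_univ, smul_eq_mul, mul_comm]
    intro t ht
    rw [← hcard t (Finset.ne_of_mem_erase ht), Set.ncard_eq_toFinset_card']
    congr 1
    ext e
    simp
  · obtain ⟨P, hP, hPS⟩ := (hS t ht).exists_isMinFamily hc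
    refine ⟨P, hP, fun j e he => ?_⟩
    have hes := (hS t ht).snd_ne_source hc (hPS j e he)
    exact ⟨hes, (hS _ hes).mem_of_mem hanti (hS t ht) (hPS j e he) rfl⟩

end MultipathPreserver
end

section
/- For every t ≠ s and every path π ∈ Π(s,t; G_{S^t}) with q = q(π): the last edge of the portion π[q:t] (the portion of π from q to t) belongs to E \ S^t and enters t, and every other edge of π[q:t] either belongs to H or is the reverse of an edge of S^t. -/
open scoped Classical

namespace MultipathPreserver

variable {V : Type*}

/-- A simple path ending at `t` and starting elsewhere has no edge leaving `t`. -/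
theorem fst_ne_of_simple {t : V} (L : List (V × V)) (s : V) (hst : s ≠ t)
    (hchain : L.IsChain (fun e f => e.2 = f.1)) (hhead : ∀ e ∈ L.head?, e.1 = s)
    (hlast : ∀ e ∈ L.getLast?, e.2 = t) (hnodup : (s :: L.map Prod.snd).Nodup) :
    ∀ e ∈ L, e.1 ≠ t := by
  induction L generalizing s with
  | nil => simp
  | cons f L ih =>
    have hf : f.1 = s := hhead f rfl
    intro e he
    rcases List.mem_cons.1 he with rfl | he
    · rwa [hf]
    · have hne : L ≠ [] := List.ne_nil_of_mem he
      have hlast' : ∀ e ∈ L.getLast?, e.2 = t := by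
        obtain ⟨a, L, rfl⟩ := List.exists_cons_of_ne_nil hne
        simpa [List.getLast?_cons_cons] using hlast
      have hnodup' : (f.2 :: L.map Prod.snd).Nodup := (List.nodup_cons.1 hnodup).2
      refine ih f.2 ?_ hchain.tail ?_ hlast' hnodup' e he
      · intro hft
        refine (List.nodup_cons.1 hnodup').1 (List.mem_map.2 ⟨_, List.getLast_mem hne, ?_⟩)
        rw [hft]
        exact hlast' _ (List.getLast?_eq_some_getLast hne)
      · obtain ⟨a, L, rfl⟩ := List.exists_cons_of_ne_nil hne
        simpa using (List.isChain_cons_cons.1 hchain).1.symm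

/-- Elements of a list after the last one satisfying `p` do not satisfy `p`. -/
theorem not_of_mem_drop_findIdx_reverse {α : Type*} (p : α → Bool) (M : List α) {e : α}
    (he : e ∈ M.drop (M.length - M.reverse.findIdx p)) : p e = false := by
  have h : e ∈ M.reverse.take (M.reverse.findIdx p) := by
    rw [List.take_reverse]
    exact List.mem_reverse.2 he
  obtain ⟨k, hk, rfl⟩ := List.mem_take_iff_getElem.1 h
  exact List.not_of_lt_findIdx (lt_of_lt_of_le hk (min_le_left _ _))

/-- Lemma `suitable_subgraph`. For every `t ≠ s` and every
`π ∈ Π(s,t; G_{S^t})` with `q = q(π)`: the suffix `π[q:t]` is nonempty, its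
last edge belongs to `E \ S^t` and enters `t`, and every other edge of
`π[q:t]` either belongs to `H` or is the reverse of an edge of `S^t`. -/
theorem suffix_structure [Fintype V]
    (E : Set (V × V)) (c : V × V → ℝ) (s : V)
    (hirr : ∀ e ∈ E, e.1 ≠ e.2)
    (hanti : ∀ e ∈ E, (e.2, e.1) ∉ E)
    (hc : ∀ e ∈ E, 0 ≤ c e)
    (H : Set (V × V)) (hHE : H ⊆ E)
    (i : ℕ) (hi : 2 ≤ i)
    (Sv : V → Set (V × V)) (hSs : Sv s = ∅)
    (hSv : ∀ v, v ≠ s → Sv v ⊆ H ∧ InducesSimple E c s v (i - 1) (Sv v)) :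
    ∀ t, t ≠ s → ∀ L ∈ PiMin E H c (Sv t) s t,
      L.drop (qPrefixLen E H L) ≠ [] ∧
      (∀ e ∈ (L.drop (qPrefixLen E H L)).getLast?,
        e ∈ E ∧ e ∉ Sv t ∧ e.2 = t) ∧
      ∀ e ∈ (L.drop (qPrefixLen E H L)).dropLast,
        e ∈ H ∨ (e.2, e.1) ∈ Sv t := by
  intro t hts L hL
  obtain ⟨⟨-, hmem, -, -, hlast, hnil⟩, -⟩ := hL
  obtain ⟨hSH, P, ⟨⟨hpath, -⟩, -⟩, hsimple, hS⟩ := hSv t hts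
  have hne : L ≠ [] := fun h => hts (hnil h).symm
  have hlt : qPrefixLen E H L < L.length := by
    have := List.length_pos_iff.2 hne
    simp only [qPrefixLen, List.length_dropLast]
    omega
  refine ⟨by simpa using hlt, ?_, ?_⟩
  · intro e he
    rw [List.getLast?_drop, if_neg (not_le.2 hlt)] at he
    have het := hlast e he
    rcases hmem e (List.mem_of_getLast? he) with h | h
    · exact ⟨h.1, h.2, het⟩
    · rw [Set.mem_ofPred_eq, hS] at h
      obtain ⟨j, hj⟩ := h
      obtain ⟨-, -, hchain, hh, hl, -⟩ := hpath j
      exact absurd het (fst_ne_of_simple (P j) s hts.symm hchain hh hl (hsimple j) _ hj)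
  · intro e he
    have hnot : e ∈ L.dropLast.drop (qPrefixLen E H L) := by
      rwa [List.dropLast_drop_eq_drop_dropLast] at he
    have hEH : ¬(e ∈ E ∧ e ∉ H) := by
      simpa using not_of_mem_drop_findIdx_reverse _ _ hnot
    rcases hmem e (List.mem_of_mem_drop (List.mem_of_mem_dropLast he)) with h | h
    · exact Or.inl (by_contra fun hH => hEH ⟨h.1, hH⟩)
    · exact Or.inr h

end MultipathPreserver
end
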